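/- Let U be a submodular distributive universe of separations. Then for every set 𝒫 of pairwise distinguishable strongly robust profiles in U there is a nested set T ⊆ U of separations such that: (i) every two profiles in 𝒫 are distinguished by some separation in T; and (ii) for every profile P ∈ 𝒫, every maximal element s of the set of orientations of members of T lying in P, and every s' ∈ P with s ≤ s', we have |s| ≤ |s'|. -/

import Mathlib

namespace SepDemo

/-- A universe of separations: a finite lattice with an order-reversing involution. -/
structure SepUniverse (U : Type*) [Lattice U] [Fintype U] where
  inv : U → U
  inv_inv : ∀ s, inv (inv s) = s
  le_iff : ∀ r s : U, r ≤ s ↔ inv s ≤ inv r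

/-- A submodular universe: a universe with a submodular order function. -/
structure SubmodUniverse (U : Type*) [Lattice U] [Fintype U] extends SepUniverse U where
  ord : U → ℕ
  ord_inv : ∀ s, ord (inv s) = ord s
  submod : ∀ s t : U, ord (s ⊔ t) + ord (s ⊓ t) ≤ ord s + ord t

variable {U : Type*} [Lattice U] [Fintype U]

/-- A separation system inside a universe: a subset closed under the involution. -/
def SepSystem (𝒰 : SepUniverse U) (S : Set U) : Prop :=
  ∀ s ∈ S, 𝒰.inv s ∈ S

/-- An orientation of `S`: contains, for each `s ∈ S`, exactly one of `s`, `s*`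
(just `s` itself if `s` is degenerate). -/
def IsOrientation (𝒰 : SepUniverse U) (S O : Set U) : Prop :=
  O ⊆ S ∧ ∀ s ∈ S, (s ∈ O ∨ 𝒰.inv s ∈ O) ∧ (s ∈ O → 𝒰.inv s ∈ O → s = 𝒰.inv s)

/-- Consistency: no `r, s ∈ O` with `{r,r*} ≠ {s,s*}` and `r* ≤ s`. -/
def Consistent (𝒰 : SepUniverse U) (O : Set U) : Prop :=
  ∀ r ∈ O, ∀ s ∈ O, ({r, 𝒰.inv r} : Set U) ≠ ({s, 𝒰.inv s} : Set U) → ¬ 𝒰.inv r ≤ s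

/-- A profile of `S`: a consistent orientation satisfying the profile property. -/
def IsProfile (𝒰 : SepUniverse U) (S P : Set U) : Prop :=
  IsOrientation 𝒰 S P ∧ Consistent 𝒰 P ∧ ∀ r ∈ P, ∀ s ∈ P, 𝒰.inv (r ⊔ s) ∉ P

/-- Regular: contains no cosmall separation. -/
def Regular (𝒰 : SepUniverse U) (P : Set U) : Prop :=
  ∀ s ∈ P, ¬ 𝒰.inv s ≤ s

/-- Two separations are nested. -/
def Nested (𝒰 : SepUniverse U) (r s : U) : Prop :=
  r ≤ s ∨ r ≤ 𝒰.inv s ∨ 𝒰.inv r ≤ s ∨ 𝒰.inv r ≤ 𝒰.inv s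

/-- A set of separations is nested if its members are pairwise nested. -/
def NestedSet (𝒰 : SepUniverse U) (N : Set U) : Prop :=
  ∀ r ∈ N, ∀ s ∈ N, Nested 𝒰 r s

/-- `s` distinguishes the orientations `O₁` and `O₂`. -/
def Distinguishes (𝒰 : SepUniverse U) (s : U) (O₁ O₂ : Set U) : Prop :=
  (s ∈ O₁ ∧ 𝒰.inv s ∈ O₂) ∨ (𝒰.inv s ∈ O₁ ∧ s ∈ O₂)

/-- Two orientations are distinguishable. -/
def Distinguishable (𝒰 : SepUniverse U) (P Q : Set U) : Prop :=
  ∃ s : U, Distinguishes 𝒰 s P Q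

/-- Structural submodularity of a separation system. -/
def StructSubmodular (S : Set U) : Prop :=
  ∀ s ∈ S, ∀ t ∈ S, s ⊔ t ∈ S ∨ s ⊓ t ∈ S

/-- `s` is trivial in `S`. -/
def IsTrivialIn (𝒰 : SepUniverse U) (S : Set U) (s : U) : Prop :=
  ∃ r ∈ S, ({r, 𝒰.inv r} : Set U) ≠ ({s, 𝒰.inv s} : Set U) ∧ s ≤ r ∧ s ≤ 𝒰.inv r

/-- A star of separations. -/
def IsStar (𝒰 : SepUniverse U) (σ : Set U) : Prop :=
  ∀ r ∈ σ, ∀ s ∈ σ, r ≠ s → r ≤ 𝒰.inv s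

/-- The shift `σ_x^{s₀}` of a star `σ` at `x ∈ σ` to `s₀`. -/
def shiftStar (𝒰 : SepUniverse U) (σ : Set U) (x s₀ : U) : Set U :=
  insert (x ⊔ s₀) ((fun y => y ⊓ 𝒰.inv s₀) '' (σ \ {x}))

/-- `s₀` emulates `r` in `S`. -/
def Emulates (𝒰 : SepUniverse U) (S : Set U) (s₀ r : U) : Prop :=
  r ≤ s₀ ∧ ∀ t ∈ S, t ≠ 𝒰.inv r → r ≤ t → t ⊔ s₀ ∈ S

/-- `s₀` emulates `r` in `S` for a set `F` of stars. -/
def EmulatesFor (𝒰 : SepUniverse U) (S : Set U) (F : Set (Set U)) (s₀ r : U) : Prop :=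
  Emulates 𝒰 S s₀ r ∧
    ∀ σ ∈ F, 𝒰.inv r ∉ σ → ∀ x ∈ σ, r ≤ x → shiftStar 𝒰 σ x s₀ ∈ F

/-- `F` forces `s`. -/
def Forces (𝒰 : SepUniverse U) (F : Set (Set U)) (s : U) : Prop :=
  ({𝒰.inv s} : Set U) ∈ F

/-- `S` is `F`-separable. -/
def FSeparable (𝒰 : SepUniverse U) (S : Set U) (F : Set (Set U)) : Prop :=
  ∀ r₁ ∈ S, ∀ r₂ ∈ S,
    ¬ IsTrivialIn 𝒰 S r₁ → ¬ IsTrivialIn 𝒰 S r₂ →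
    r₁ ≠ 𝒰.inv r₁ → r₂ ≠ 𝒰.inv r₂ →
    ¬ Forces 𝒰 F r₁ → ¬ Forces 𝒰 F r₂ →
    r₁ ≤ 𝒰.inv r₂ →
    ∃ s₀ ∈ S, r₁ ≤ s₀ ∧ s₀ ≤ 𝒰.inv r₂ ∧
      EmulatesFor 𝒰 S F s₀ r₁ ∧ EmulatesFor 𝒰 S F (𝒰.inv s₀) r₂

/-- `r` is `F`-critical. -/
def FCritical (𝒰 : SepUniverse U) (F : Set (Set U)) (r : U) : Prop :=
  (∃ σ ∈ F, r ∈ σ) ∧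
    ¬ ∃ σ' ∈ F, σ' ∩ ({r, 𝒰.inv r} : Set U) = ({𝒰.inv r} : Set U)

/-- `S` is critically `F`-separable. -/
def CritFSeparable (𝒰 : SepUniverse U) (S : Set U) (F : Set (Set U)) : Prop :=
  ∀ r₁ ∈ S, ∀ r₂ ∈ S, FCritical 𝒰 F r₁ → FCritical 𝒰 F r₂ → r₁ ≤ 𝒰.inv r₂ →
    ∃ s₀ ∈ S, EmulatesFor 𝒰 S F s₀ r₁ ∧ EmulatesFor 𝒰 S F (𝒰.inv s₀) r₂

/-- An `F`-tangle of `S`: a consistent orientation including no member of `F`. -/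
def FTangle (𝒰 : SepUniverse U) (S : Set U) (F : Set (Set U)) (O : Set U) : Prop :=
  IsOrientation 𝒰 S O ∧ Consistent 𝒰 O ∧ ∀ σ ∈ F, ¬ σ ⊆ O

/-- `F` is standard for `S`: it forces all trivial separations of `S`. -/
def StandardFor (𝒰 : SepUniverse U) (S : Set U) (F : Set (Set U)) : Prop :=
  ∀ r ∈ S, IsTrivialIn 𝒰 S r → ({𝒰.inv r} : Set U) ∈ F

/-- An `S`-tree: a finite tree together with edge labels in `S` commuting with
the involution. -/
structure STree (𝒰 : SepUniverse U) (S : Set U) where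
  V : Type
  fintypeV : Fintype V
  G : SimpleGraph V
  isTree : G.IsTree
  label : V → V → U
  label_mem : ∀ x y, G.Adj x y → label x y ∈ S
  label_inv : ∀ x y, G.Adj x y → label y x = 𝒰.inv (label x y)

namespace STree

variable {𝒰 : SepUniverse U} {S : Set U}

/-- The star `α(t)` associated with a node `t`. -/
def nodeStar (T : STree 𝒰 S) (t : T.V) : Set U :=
  {u | ∃ s, T.G.Adj s t ∧ T.label s t = u}

/-- The `S`-tree is over `F`. -/
def Over (T : STree 𝒰 S) (F : Set (Set U)) : Prop :=
  ∀ t : T.V, T.nodeStar t ∈ F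

/-- Irredundance of an `S`-tree. -/
def Irredundant (T : STree 𝒰 S) : Prop :=
  ∀ t t' t'' : T.V, T.G.Adj t' t → T.G.Adj t'' t → t' ≠ t'' →
    T.label t' t ≠ T.label t'' t

/-- The set of edge labels of the tree. -/
def labels (T : STree 𝒰 S) : Set U :=
  {u | ∃ x y, T.G.Adj x y ∧ T.label x y = u}

/-- `t` is a sink of the orientation of the tree induced by `P`. -/
def IsSinkOf (T : STree 𝒰 S) (P : Set U) (t : T.V) : Prop :=
  ∀ s, T.G.Adj s t → T.label s t ∈ P

/-- The degree of a node. -/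
noncomputable def deg (T : STree 𝒰 S) (t : T.V) : ℕ :=
  (T.G.neighborSet t).ncard

/-- The maximum degree of the tree. -/
noncomputable def maxDeg (T : STree 𝒰 S) : ℕ :=
  sSup {n | ∃ t : T.V, T.deg t = n}

end STree

/-- A tree of tangles for `S`: an irredundant `S`-tree whose edge labels
distinguish every two distinct regular profiles of `S`. -/
def TreeOfTangles (𝒰 : SepUniverse U) (S : Set U) (T : STree 𝒰 S) : Prop :=
  T.Irredundant ∧
    ∀ P Q : Set U, IsProfile 𝒰 S P → Regular 𝒰 P → IsProfile 𝒰 S Q → Regular 𝒰 Q →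
      P ≠ Q → ∃ s ∈ T.labels, Distinguishes 𝒰 s P Q

/-- `δ(P)`: the minimum size of a subset of `P` distinguishing `P` from every
other regular profile of `S`. -/
noncomputable def deltaP (𝒰 : SepUniverse U) (S P : Set U) : ℕ :=
  sInf {n | ∃ D : Set U, D ⊆ P ∧ D.ncard = n ∧
    ∀ Q : Set U, IsProfile 𝒰 S Q → Regular 𝒰 Q → Q ≠ P →
      ∃ s ∈ D, Distinguishes 𝒰 s P Q}

/-- `S_k`: the separations of order less than `k`. -/
def Sk (𝒱 : SubmodUniverse U) (k : ℕ) : Set U := {s | 𝒱.ord s < k}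

/-- `s` distinguishes `P` and `Q` efficiently. -/
def EffDistinguishes (𝒱 : SubmodUniverse U) (s : U) (P Q : Set U) : Prop :=
  Distinguishes 𝒱.toSepUniverse s P Q ∧
    ∀ t : U, Distinguishes 𝒱.toSepUniverse t P Q → 𝒱.ord s ≤ 𝒱.ord t

/-- Property `Eff(P)` of a star `σ`. -/
def EffProp (𝒱 : SubmodUniverse U) (σ P : Set U) : Prop :=
  ¬ ∃ s ∈ σ, ∃ s' ∈ P, s ≤ s' ∧ 𝒱.ord s' < 𝒱.ord s

/-- `s` is a splice for `r`. -/
def SpliceFor (𝒱 : SubmodUniverse U) (s r : U) : Prop :=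
  r ≤ s ∧ ¬ ∃ t : U, r ≤ t ∧ t ≤ s ∧ 𝒱.ord t < 𝒱.ord s

/-- `s` is a splice between `r₁` and `r₂`. -/
def SpliceBetween (𝒱 : SubmodUniverse U) (s r₁ r₂ : U) : Prop :=
  r₁ ≤ s ∧ s ≤ r₂ ∧ ∀ t : U, r₁ ≤ t → t ≤ r₂ → 𝒱.ord s ≤ 𝒱.ord t

/-- The set `F_e` of stars in `S_k` included in at most one profile of `𝔓` and
satisfying `Eff(P)` whenever included in `P ∈ 𝔓`. -/
def Fe (𝒱 : SubmodUniverse U) (k : ℕ) (𝔓 : Set (Set U)) : Set (Set U) :=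
  {σ | σ ⊆ Sk 𝒱 k ∧ IsStar 𝒱.toSepUniverse σ ∧
    (∀ P ∈ 𝔓, ∀ Q ∈ 𝔓, σ ⊆ P → σ ⊆ Q → P = Q) ∧
    (∀ P ∈ 𝔓, σ ⊆ P → EffProp 𝒱 σ P)}

/-- `δ_e(P)`: the minimum size of a star `σ ⊆ P` with `Eff(P)` such that every
other regular profile of `S_k` contains the inverse of some element of `σ`. -/
noncomputable def deltaE (𝒱 : SubmodUniverse U) (k : ℕ) (P : Set U) : ℕ :=
  sInf {n | ∃ σ : Set U, σ ⊆ P ∧ IsStar 𝒱.toSepUniverse σ ∧ EffProp 𝒱 σ P ∧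
    σ.ncard = n ∧
    ∀ Q : Set U, IsProfile 𝒱.toSepUniverse (Sk 𝒱 k) Q → Regular 𝒱.toSepUniverse Q →
      Q ≠ P → ∃ s ∈ σ, 𝒱.inv s ∈ Q}

/-- `δ_{e,max}`: maximum of `δ_e` over all regular profiles of `S_k`. -/
noncomputable def deltaEMax (𝒱 : SubmodUniverse U) (k : ℕ) : ℕ :=
  sSup {n | ∃ P : Set U, IsProfile 𝒱.toSepUniverse (Sk 𝒱 k) P ∧
    Regular 𝒱.toSepUniverse P ∧ deltaE 𝒱 k P = n}

/-- `P` is a profile in `U`: a `k`-profile for some `k`. -/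
def ProfileIn (𝒱 : SubmodUniverse U) (P : Set U) : Prop :=
  ∃ k : ℕ, IsProfile 𝒱.toSepUniverse (Sk 𝒱 k) P

/-- Strong robustness of a profile. -/
def StronglyRobust (𝒱 : SubmodUniverse U) (P : Set U) : Prop :=
  ∀ s ∈ P, ∀ r : U, 𝒱.ord (s ⊔ r) ≤ 𝒱.ord s → 𝒱.ord (s ⊔ 𝒱.inv r) ≤ 𝒱.ord s →
    (s ⊔ r ∈ P ∨ s ⊔ 𝒱.inv r ∈ P)

/-- `O` weakly orients a separation as `s'` if `s' ≤ r` for some `r ∈ O`. -/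
def WeaklyOrientsAs (O : Set U) (s' : U) : Prop :=
  ∃ r ∈ O, s' ≤ r

/-- `O` weakly orients `s` (as `s` or as `s*`). -/
def WeaklyOrients (𝒰 : SepUniverse U) (O : Set U) (s : U) : Prop :=
  WeaklyOrientsAs O s ∨ WeaklyOrientsAs O (𝒰.inv s)

/-- The set `F_d` of stars, relative to the set of profiles `𝔓`. -/
def Fd (𝒱 : SubmodUniverse U) (𝔓 : Set (Set U)) : Set (Set U) :=
  {σ | IsStar 𝒱.toSepUniverse σ ∧
    (∀ P ∈ 𝔓, ∀ Q ∈ 𝔓, σ ⊆ P → σ ⊆ Q → P = Q) ∧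
    (∀ P ∈ 𝔓, ¬ σ ⊆ P → ∃ s ∈ σ, WeaklyOrientsAs P (𝒱.inv s)) ∧
    (∀ P ∈ 𝔓, σ ⊆ P → EffProp 𝒱 σ P)}

/-!
Two efficient distinguishers of pairs of robust profiles can be uncrossed: if `r` and `s` cross,
`|r| ≤ |s|`, and `r` does not itself distinguish the pair `Q`, `Q'` which `s` distinguishes, then
`Q` and `Q'` orient `r` the same way, and submodularity together with the robustness of the profiles
distinguished by `r` makes one of the two corners of `r` and `s` on that side an efficient
distinguisher of `Q` and `Q'`. So the sets of efficient distinguishers of the pairs in `𝔓`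
splinter, and a splintering family has a nested transversal.

Such a transversal already has the maximality property. If `s ∈ P` is maximal among its
orientations in `P`, efficiently distinguishes `Q ∋ s` from `R ∋ s*`, and lies below some `s' ∈ P`
of smaller order, then `s'` distinguishes `P` from `Q`, so the transversal contains a separation
`t ∈ P`, up to orientation, of order at most `|s'|` that distinguishes them; but `t` is nested with
`s`, and this forces `s < t`, against the maximality of `s`.
-/

section Splinter

variable {α ι : Type*} {R : α → α → Prop} {A : ι → Set α} {I : Set ι} {a b c : α} {i m : ι}

/-- `c` is a corner of `a` and `b` with respect to a nestedness relation `R`: it is nested with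
both, and with everything that is nested with both. -/
def IsCorner (R : α → α → Prop) (a b c : α) : Prop :=
  R c a ∧ R c b ∧ ∀ x, R x a → R x b → R x c

/-- The family `A`, indexed by `I`, splinters with respect to a nestedness relation `R`: if
`a ∈ A i` and `b ∈ A j` cross, then one of them lies in both sets, or one of the sets contains a
corner of `a` and `b`. -/
def Splinters (R : α → α → Prop) (I : Set ι) (A : ι → Set α) : Prop :=
  ∀ i ∈ I, ∀ j ∈ I, ∀ a ∈ A i, ∀ b ∈ A j,
    R a b ∨ a ∈ A j ∨ b ∈ A i ∨ ∃ c ∈ A i ∪ A j, IsCorner R a b c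

lemma IsCorner.swap (h : IsCorner R a b c) : IsCorner R b a c :=
  ⟨h.2.1, h.1, fun x hxb hxa => h.2.2 x hxa hxb⟩

lemma Splinters.mono {J : Set ι} (hA : Splinters R I A) (hJ : J ⊆ I) : Splinters R J A :=
  fun i hi j hj => hA i (hJ hi) j (hJ hj)

lemma Splinters.sep_rel [Std.Symm R] (hA : Splinters R I A) (a : α) :
    Splinters R I (fun i => {x ∈ A i | R x a}) := by
  rintro i hi j hj x ⟨hx, hxa⟩ y ⟨hy, hya⟩
  rcases hA i hi j hj x hx y hy with h | h | h | ⟨c, hc, hcorner⟩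
  · exact .inl h
  · exact .inr (.inl ⟨h, hxa⟩)
  · exact .inr (.inr (.inl ⟨h, hya⟩))
  · have hca : R c a := symm (hcorner.2.2 a (symm hxa) (symm hya))
    exact .inr (.inr (.inr ⟨c, hc.imp (⟨·, hca⟩) (⟨·, hca⟩), hcorner⟩))

-- If `a` crosses `b ∈ A i`, an element of `A m` nested with `b` and with all that `a` is nested
-- with in `N` would contradict the choice of `a`.
lemma Splinters.exists_rel_of_maximalFor [Std.Refl R] [Std.Symm R] (hA : Splinters R I A)
    (hm : m ∈ I) (hi : i ∈ I) {N : Set α} (hN : ∀ x ∈ N, ∀ y ∈ N, R x y)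
    (ha : MaximalFor (· ∈ A m) (fun a => {x ∈ N | R a x}) a) (hbN : b ∈ N) (hb : b ∈ A i) :
    ∃ c ∈ A i, R c a := by
  by_cases hab : R a b
  · exact ⟨b, hb, symm hab⟩
  have no_better : ∀ c ∈ A m, (∀ x ∈ N, R a x → R c x) → ¬ R c b := fun c hc hac hcb =>
    hab (ha.le_of_le hc (fun x hx => ⟨hx.1, hac x hx.1 hx.2⟩) ⟨hbN, hcb⟩).2
  rcases hA m hm i hi a ha.prop b hb with h | h | h | ⟨c, hc | hc, hcorner⟩
  · exact absurd h hab
  · exact ⟨a, h, refl a⟩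
  · exact absurd (refl b) (no_better b h fun x hx _ => hN b hbN x hx)
  · refine absurd hcorner.2.1 (no_better c hc fun x hx hax => ?_)
    exact symm (hcorner.2.2 x (symm hax) (hN x hx b hbN))
  · exact ⟨c, hc, hcorner.1⟩

theorem Splinters.exists_transversal [Std.Refl R] [Std.Symm R] (hI : I.Finite)
    (hA : Splinters R I A) (hne : ∀ i ∈ I, (A i).Nonempty) :
    ∃ N : Set α, N.Finite ∧ N ⊆ ⋃ i ∈ I, A i ∧ (∀ i ∈ I, (N ∩ A i).Nonempty) ∧
      ∀ x ∈ N, ∀ y ∈ N, R x y := by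
  induction I, hI using Set.Finite.induction_on generalizing A with
  | empty => exact ⟨∅, by simp⟩
  | @insert m I _ _ ih =>
    have hsub : I ⊆ insert m I := Set.subset_insert m I
    have hm : m ∈ insert m I := Set.mem_insert m I
    obtain ⟨N, hNfin, -, hNmeets, hN⟩ := ih (hA.mono hsub) fun i hi => hne i (hsub hi)
    obtain ⟨a, ha⟩ : ∃ a, MaximalFor (· ∈ A m) (fun a => {x ∈ N | R a x}) a :=
      Set.Finite.exists_maximalFor' _ _
        (hNfin.finite_subsets.subset (Set.image_subset_iff.2 fun _ _ => Set.sep_subset N _))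
        (hne m hm)
    have hrel : ∀ i ∈ I, {x ∈ A i | R x a}.Nonempty := fun i hi =>
      let ⟨_, hbN, hb⟩ := hNmeets i hi
      hA.exists_rel_of_maximalFor hm (hsub hi) hN ha hbN hb
    obtain ⟨N', hN'fin, hN'sub, hN'meets, hN'⟩ := ih ((hA.mono hsub).sep_rel a) hrel
    simp only [Set.subset_def, Set.mem_iUnion₂] at hN'sub
    have hN'a : ∀ x ∈ N', R x a := fun x hx => (hN'sub x hx).choose_spec.2.2
    refine ⟨insert a N', hN'fin.insert a, ?_, ?_, ?_⟩
    · rintro x (rfl | hx)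
      · exact Set.mem_biUnion hm ha.prop
      · obtain ⟨i, hi, hxi, -⟩ := hN'sub x hx
        exact Set.mem_biUnion (hsub hi) hxi
    · rintro i (rfl | hi)
      · exact ⟨a, Set.mem_insert a N', ha.prop⟩
      · obtain ⟨x, hx, hxi, -⟩ := hN'meets i hi
        exact ⟨x, Set.mem_insert_of_mem a hx, hxi⟩
    · rintro x (rfl | hx) y (rfl | hy)
      · exact refl _
      · exact symm (hN'a y hy)
      · exact hN'a x hx
      · exact hN' x hx y hy

end Splinter

section Nested

namespace SepUniverse

variable (𝒰 : SepUniverse U) {a b : U}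

lemma inv_le_inv_iff : 𝒰.inv a ≤ 𝒰.inv b ↔ b ≤ a :=
  (𝒰.le_iff b a).symm

lemma le_inv_comm : a ≤ 𝒰.inv b ↔ b ≤ 𝒰.inv a := by
  rw [𝒰.le_iff, 𝒰.inv_inv]

lemma inv_le_comm : 𝒰.inv a ≤ b ↔ 𝒰.inv b ≤ a := by
  rw [𝒰.le_iff, 𝒰.inv_inv]

lemma inv_sup (a b : U) : 𝒰.inv (a ⊔ b) = 𝒰.inv a ⊓ 𝒰.inv b :=
  eq_of_forall_le_iff fun c => by
    rw [𝒰.le_inv_comm, sup_le_iff, le_inf_iff, 𝒰.le_inv_comm, 𝒰.le_inv_comm (b := c)]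

end SepUniverse

variable {𝒰 : SepUniverse U} {a b c x : U}

lemma nested_iff : Nested 𝒰 a b ↔ (a ≤ b ∨ 𝒰.inv a ≤ b) ∨ (b ≤ a ∨ b ≤ 𝒰.inv a) := by
  rw [Nested, 𝒰.inv_le_inv_iff, 𝒰.le_inv_comm]
  tauto

lemma nested_inv_left : Nested 𝒰 (𝒰.inv a) b ↔ Nested 𝒰 a b := by
  rw [Nested, Nested, 𝒰.inv_inv]
  tauto

lemma nested_inv_right : Nested 𝒰 a (𝒰.inv b) ↔ Nested 𝒰 a b := by
  rw [Nested, Nested, 𝒰.inv_inv]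
  tauto

lemma Nested.symm (h : Nested 𝒰 a b) : Nested 𝒰 b a := by
  rw [nested_iff]
  rw [Nested, 𝒰.inv_le_comm, 𝒰.inv_le_inv_iff] at h
  tauto

instance : Std.Refl (Nested 𝒰) := ⟨fun _ => .inl le_rfl⟩

instance : Std.Symm (Nested 𝒰) := ⟨fun _ _ => Nested.symm⟩

lemma NestedSet.setOf_mem_or_inv_mem {N : Set U} (hN : NestedSet 𝒰 N) :
    NestedSet 𝒰 {s | s ∈ N ∨ 𝒰.inv s ∈ N} := by
  rintro r (hr | hr) s (hs | hs)
  · exact hN r hr s hs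
  · exact nested_inv_right.1 (hN r hr _ hs)
  · exact nested_inv_left.1 (hN _ hr s hs)
  · exact nested_inv_left.1 (nested_inv_right.1 (hN _ hr _ hs))

lemma isCorner_inv_left : IsCorner (Nested 𝒰) (𝒰.inv a) b c ↔ IsCorner (Nested 𝒰) a b c := by
  simp only [IsCorner, nested_inv_right]

lemma isCorner_inv_right : IsCorner (Nested 𝒰) a (𝒰.inv b) c ↔ IsCorner (Nested 𝒰) a b c := by
  simp only [IsCorner, nested_inv_right]

lemma Nested.sup_right (hab : ¬ Nested 𝒰 a b) (hxa : Nested 𝒰 x a) (hxb : Nested 𝒰 x b) :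
    Nested 𝒰 x (a ⊔ b) := by
  rw [nested_iff] at hxa hxb ⊢
  rcases hxa with h | hxa
  · exact .inl (h.imp le_sup_of_le_left le_sup_of_le_left)
  rcases hxb with h | hxb
  · exact .inl (h.imp le_sup_of_le_right le_sup_of_le_right)
  rcases hxa with hax | hax <;> rcases hxb with hbx | hbx
  · exact .inr (.inl (sup_le hax hbx))
  · exact absurd (.inr (.inl (hax.trans (𝒰.le_inv_comm.1 hbx)))) hab
  · exact absurd (.inr (.inl (hax.trans (𝒰.inv_le_inv_iff.2 hbx)))) hab
  · exact .inr (.inr (sup_le hax hbx))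

lemma isCorner_sup (hab : ¬ Nested 𝒰 a b) : IsCorner (Nested 𝒰) a b (a ⊔ b) :=
  ⟨symm (.inl le_sup_left), symm (.inl le_sup_right), fun _ => Nested.sup_right hab⟩

end Nested

section Profiles

variable {𝒱 : SubmodUniverse U} {P : Set U} {s t : U}

lemma ProfileIn.inv_notMem (hP : ProfileIn 𝒱 P) (hs : s ∈ P) : 𝒱.inv s ∉ P := by
  obtain ⟨k, -, -, hsup⟩ := hP
  simpa using hsup s hs s hs

lemma ProfileIn.mem_or_inv_mem (hP : ProfileIn 𝒱 P) (hs : s ∈ P) (hts : 𝒱.ord t ≤ 𝒱.ord s) :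
    t ∈ P ∨ 𝒱.inv t ∈ P := by
  obtain ⟨k, ⟨hsub, horient⟩, -, -⟩ := hP
  exact (horient t (hts.trans_lt (hsub hs))).1

lemma ProfileIn.sup_mem (hP : ProfileIn 𝒱 P) (hs : s ∈ P) (ht : t ∈ P)
    (hord : 𝒱.ord (s ⊔ t) ≤ 𝒱.ord s) : s ⊔ t ∈ P := by
  refine (hP.mem_or_inv_mem hs hord).resolve_right ?_
  obtain ⟨k, -, -, hsup⟩ := hP
  exact hsup s hs t ht

lemma ProfileIn.mem_of_le (hP : ProfileIn 𝒱 P) (hs : s ∈ P) (hts : t ≤ s)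
    (hord : 𝒱.ord t ≤ 𝒱.ord s) (hne : t ≠ 𝒱.inv s) : t ∈ P := by
  refine (hP.mem_or_inv_mem hs hord).resolve_right fun ht => ?_
  have hpair : ({𝒱.inv t, 𝒱.inv (𝒱.inv t)} : Set U) ≠ {s, 𝒱.inv s} := by
    intro heq
    rcases heq ▸ Set.mem_insert (𝒱.inv t) _ with h | h
    · exact hne (by rw [← h, 𝒱.inv_inv])
    · exact hP.inv_notMem hs (h ▸ ht)
  obtain ⟨k, -, hcons, -⟩ := hP
  exact hcons _ ht s hs hpair (by rwa [𝒱.inv_inv])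

lemma ProfileIn.mem_of_le_of_ord_lt (hP : ProfileIn 𝒱 P) (hs : s ∈ P) (hts : t ≤ s)
    (hord : 𝒱.ord t < 𝒱.ord s) : t ∈ P :=
  hP.mem_of_le hs hts hord.le fun h => hord.ne (by rw [h, 𝒱.ord_inv])

/-- Robustness of a profile: the weakening of `StronglyRobust` that concerns only joins of order
strictly less than that of `s`. -/
def Robust (𝒱 : SubmodUniverse U) (P : Set U) : Prop :=
  ∀ s ∈ P, ∀ r : U, 𝒱.ord (s ⊔ r) < 𝒱.ord s → 𝒱.ord (s ⊔ 𝒱.inv r) < 𝒱.ord s →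
    (s ⊔ r ∈ P ∨ s ⊔ 𝒱.inv r ∈ P)

lemma StronglyRobust.robust (hP : StronglyRobust 𝒱 P) : Robust 𝒱 P :=
  fun s hs r hr hr' => hP s hs r hr.le hr'.le

end Profiles

section Distinguishing

variable {𝒱 : SubmodUniverse U} {P P' Q Q' R : Set U} {r s t : U}

lemma distinguishes_comm {𝒰 : SepUniverse U} : Distinguishes 𝒰 s P Q ↔ Distinguishes 𝒰 s Q P := by
  rw [Distinguishes, Distinguishes]
  tauto

lemma distinguishes_inv {𝒰 : SepUniverse U} :
    Distinguishes 𝒰 (𝒰.inv s) P Q ↔ Distinguishes 𝒰 s P Q := by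
  rw [Distinguishes, Distinguishes, 𝒰.inv_inv]
  tauto

lemma effDistinguishes_comm : EffDistinguishes 𝒱 s P Q ↔ EffDistinguishes 𝒱 s Q P := by
  simp only [EffDistinguishes, distinguishes_comm (P := P)]

lemma effDistinguishes_inv : EffDistinguishes 𝒱 (𝒱.inv s) P Q ↔ EffDistinguishes 𝒱 s P Q := by
  simp only [EffDistinguishes, distinguishes_inv, 𝒱.ord_inv]

lemma Distinguishable.exists_effDistinguishes (h : Distinguishable 𝒱.toSepUniverse P Q) :
    ∃ s, EffDistinguishes 𝒱 s P Q :=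
  let ⟨s, hs⟩ := exists_minimalFor_of_wellFoundedLT
    (Distinguishes 𝒱.toSepUniverse · P Q) 𝒱.ord h
  ⟨s, hs.prop, fun t ht => (le_total (𝒱.ord s) (𝒱.ord t)).elim id (hs.le_of_le ht)⟩

lemma Distinguishes.mem_or_inv_mem (hs : Distinguishes 𝒱.toSepUniverse s Q Q')
    (hQ : ProfileIn 𝒱 Q) (hord : 𝒱.ord r ≤ 𝒱.ord s) : r ∈ Q ∨ 𝒱.inv r ∈ Q := by
  rcases hs with ⟨hsQ, -⟩ | ⟨hsQ, -⟩
  · exact hQ.mem_or_inv_mem hsQ hord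
  · exact hQ.mem_or_inv_mem hsQ (by rwa [𝒱.ord_inv])

lemma Distinguishes.mem_and_mem_or_inv_mem_and_inv_mem
    (hs : Distinguishes 𝒱.toSepUniverse s Q Q') (hQ : ProfileIn 𝒱 Q) (hQ' : ProfileIn 𝒱 Q')
    (hord : 𝒱.ord r ≤ 𝒱.ord s) (hr : ¬ Distinguishes 𝒱.toSepUniverse r Q Q') :
    (r ∈ Q ∧ r ∈ Q') ∨ (𝒱.inv r ∈ Q ∧ 𝒱.inv r ∈ Q') := by
  have horientQ := hs.mem_or_inv_mem hQ hord
  have horientQ' := (distinguishes_comm.1 hs).mem_or_inv_mem hQ' hord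
  rw [Distinguishes] at hr
  tauto

namespace EffDistinguishes

lemma notMem_of_le_of_ord_lt (hs : EffDistinguishes 𝒱 s P P') (hP' : ProfileIn 𝒱 P')
    (hsP' : 𝒱.inv s ∈ P') (hst : s ≤ t) (hord : 𝒱.ord t < 𝒱.ord s) : t ∉ P := by
  intro htP
  have htP' : 𝒱.inv t ∈ P' := hP'.mem_of_le_of_ord_lt hsP' (𝒱.inv_le_inv_iff.2 hst)
    (by simpa only [𝒱.ord_inv] using hord)
  exact hord.not_ge (hs.2 t (.inl ⟨htP, htP'⟩))

lemma ord_le_ord_sup_or (hs : EffDistinguishes 𝒱 s P P') (hrob : Robust 𝒱 P)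
    (hP' : ProfileIn 𝒱 P') (hsP : s ∈ P) (hsP' : 𝒱.inv s ∈ P') (r : U) :
    𝒱.ord s ≤ 𝒱.ord (s ⊔ r) ∨ 𝒱.ord s ≤ 𝒱.ord (s ⊔ 𝒱.inv r) := by
  by_contra! h
  rcases hrob s hsP r h.1 h.2 with hmem | hmem
  · exact hs.notMem_of_le_of_ord_lt hP' hsP' le_sup_left h.1 hmem
  · exact hs.notMem_of_le_of_ord_lt hP' hsP' le_sup_left h.2 hmem

end EffDistinguishes

lemma SubmodUniverse.ord_sup_le_of_ord_le_ord_inv_sup_inv (𝒱 : SubmodUniverse U)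
    (h : 𝒱.ord r ≤ 𝒱.ord (𝒱.inv r ⊔ 𝒱.inv s)) : 𝒱.ord (s ⊔ r) ≤ 𝒱.ord s := by
  have hinf : 𝒱.ord (𝒱.inv r ⊔ 𝒱.inv s) = 𝒱.ord (s ⊓ r) := by
    rw [← 𝒱.ord_inv, 𝒱.inv_sup, 𝒱.inv_inv, 𝒱.inv_inv, inf_comm]
  have hsubmod := 𝒱.submod s r
  omega

namespace EffDistinguishes

lemma ord_sup_le_or_ord_inv_sup_le (hr : EffDistinguishes 𝒱 r P P')
    (hP : ProfileIn 𝒱 P ∧ Robust 𝒱 P) (hP' : ProfileIn 𝒱 P' ∧ Robust 𝒱 P') (s : U) :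
    𝒱.ord (s ⊔ r) ≤ 𝒱.ord s ∨ 𝒱.ord (𝒱.inv s ⊔ r) ≤ 𝒱.ord (𝒱.inv s) := by
  wlog hrP : 𝒱.inv r ∈ P ∧ r ∈ P' generalizing P P'
  · exact this (effDistinguishes_comm.1 hr) hP' hP (hr.1.resolve_right hrP).symm
  have hcorner := (effDistinguishes_inv.2 hr).ord_le_ord_sup_or hP.2 hP'.1 hrP.1
    (by simpa only [𝒱.inv_inv] using hrP.2) s
  rw [𝒱.ord_inv] at hcorner
  refine hcorner.symm.imp 𝒱.ord_sup_le_of_ord_le_ord_inv_sup_inv fun h => ?_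
  exact 𝒱.ord_sup_le_of_ord_le_ord_inv_sup_inv (by rwa [𝒱.inv_inv])

lemma sup (hs : EffDistinguishes 𝒱 s Q Q') (hQ : ProfileIn 𝒱 Q) (hQ' : ProfileIn 𝒱 Q')
    (hsQ : s ∈ Q) (hsQ' : 𝒱.inv s ∈ Q') (hrQ : r ∈ Q)
    (hrs : ¬ Nested 𝒱.toSepUniverse r s) (hord : 𝒱.ord (s ⊔ r) ≤ 𝒱.ord s) :
    EffDistinguishes 𝒱 (s ⊔ r) Q Q' := by
  have hne : 𝒱.inv (s ⊔ r) ≠ 𝒱.inv (𝒱.inv s) := by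
    intro h
    have hsup : s ⊔ r = 𝒱.inv s := by rw [← 𝒱.inv_inv (s ⊔ r), h, 𝒱.inv_inv]
    exact hrs (.inr (.inl (hsup ▸ le_sup_right)))
  have hmem' : 𝒱.inv (s ⊔ r) ∈ Q' := hQ'.mem_of_le hsQ' (𝒱.inv_le_inv_iff.2 le_sup_left)
    (by simpa only [𝒱.ord_inv] using hord) hne
  exact ⟨.inl ⟨hQ.sup_mem hsQ hrQ hord, hmem'⟩, fun t ht => hord.trans (hs.2 t ht)⟩

lemma exists_isCorner_of_mem_of_mem (hs : EffDistinguishes 𝒱 s Q Q') (hQ : ProfileIn 𝒱 Q)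
    (hQ' : ProfileIn 𝒱 Q') (hrQ : r ∈ Q) (hrQ' : r ∈ Q') (hrs : ¬ Nested 𝒱.toSepUniverse r s)
    (hord : 𝒱.ord (s ⊔ r) ≤ 𝒱.ord s ∨ 𝒱.ord (𝒱.inv s ⊔ r) ≤ 𝒱.ord (𝒱.inv s)) :
    ∃ c, EffDistinguishes 𝒱 c Q Q' ∧ IsCorner (Nested 𝒱.toSepUniverse) r s c := by
  wlog hsup : 𝒱.ord (s ⊔ r) ≤ 𝒱.ord s generalizing s
  · have h := this (effDistinguishes_inv.2 hs) (mt nested_inv_right.1 hrs)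
      (by rw [𝒱.inv_inv]; exact hord.symm) (hord.resolve_left hsup)
    simpa only [isCorner_inv_right] using h
  wlog hsQ : s ∈ Q ∧ 𝒱.inv s ∈ Q' generalizing Q Q'
  · have h := this hQ' hQ hrQ' hrQ (effDistinguishes_comm.1 hs) (hs.1.resolve_left hsQ).symm
    simpa only [effDistinguishes_comm (P := Q)] using h
  exact ⟨s ⊔ r, hs.sup hQ hQ' hsQ.1 hsQ.2 hrQ hrs hsup, (isCorner_sup (mt Nested.symm hrs)).swap⟩

theorem uncross (hr : EffDistinguishes 𝒱 r P P') (hs : EffDistinguishes 𝒱 s Q Q')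
    (hP : ProfileIn 𝒱 P ∧ Robust 𝒱 P) (hP' : ProfileIn 𝒱 P' ∧ Robust 𝒱 P')
    (hQ : ProfileIn 𝒱 Q) (hQ' : ProfileIn 𝒱 Q') (hord : 𝒱.ord r ≤ 𝒱.ord s) :
    Nested 𝒱.toSepUniverse r s ∨ EffDistinguishes 𝒱 r Q Q' ∨
      ∃ c, EffDistinguishes 𝒱 c Q Q' ∧ IsCorner (Nested 𝒱.toSepUniverse) r s c := by
  by_cases hrs : Nested 𝒱.toSepUniverse r s
  · exact .inl hrs
  by_cases hd : Distinguishes 𝒱.toSepUniverse r Q Q'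
  · exact .inr (.inl ⟨hd, fun t ht => hord.trans (hs.2 t ht)⟩)
  refine .inr (.inr ?_)
  wlog hagree : r ∈ Q ∧ r ∈ Q' generalizing r
  · have hagree' := (hs.1.mem_and_mem_or_inv_mem_and_inv_mem hQ hQ' hord hd).resolve_left hagree
    have h := this (effDistinguishes_inv.2 hr) (by rwa [𝒱.ord_inv])
      (mt nested_inv_left.1 hrs) (mt distinguishes_inv.1 hd) hagree'
    simpa only [isCorner_inv_left] using h
  exact hs.exists_isCorner_of_mem_of_mem hQ hQ' hagree.1 hagree.2 hrs
    (hr.ord_sup_le_or_ord_inv_sup_le hP hP' s)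

lemma le_of_nested_of_ord_lt (hs : EffDistinguishes 𝒱 s Q R) (hP : ProfileIn 𝒱 P)
    (hQ : ProfileIn 𝒱 Q) (hR : ProfileIn 𝒱 R) (hsP : s ∈ P) (hsQ : s ∈ Q) (hsR : 𝒱.inv s ∈ R)
    (htP : t ∈ P) (htQ : 𝒱.inv t ∈ Q) (hts : Nested 𝒱.toSepUniverse t s)
    (hord : 𝒱.ord t < 𝒱.ord s) : s ≤ t := by
  rcases hts with h | h | h | h
  · exact absurd htQ (hQ.inv_notMem (hQ.mem_of_le_of_ord_lt hsQ h hord))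
  · have htR : t ∈ R := hR.mem_of_le_of_ord_lt hsR h (by rwa [𝒱.ord_inv])
    exact absurd (hs.2 t (.inr ⟨htQ, htR⟩)) hord.not_ge
  · exact absurd (hP.mem_of_le_of_ord_lt hsP h (by rwa [𝒱.ord_inv])) (hP.inv_notMem htP)
  · exact 𝒱.inv_le_inv_iff.1 h

end EffDistinguishes

end Distinguishing

section TreeOfTangles

variable {𝒱 : SubmodUniverse U} {𝔓 : Set (Set U)} {P : Set U} {s s' : U}

/-- The separations that efficiently distinguish the two members of the pair `p`. -/
def effDistinguishers (𝒱 : SubmodUniverse U) (p : Set U × Set U) : Set U :=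
  {s | EffDistinguishes 𝒱 s p.1 p.2}

theorem splinters_effDistinguishers (h𝔓 : ∀ P ∈ 𝔓, ProfileIn 𝒱 P ∧ Robust 𝒱 P) :
    Splinters (Nested 𝒱.toSepUniverse) 𝔓.offDiag (effDistinguishers 𝒱) := by
  intro p hp q hq r hr s hs
  wlog hord : 𝒱.ord r ≤ 𝒱.ord s generalizing p q r s
  · rcases this q hq p hp s hs r hr (le_of_not_ge hord) with h | h | h | ⟨c, hc, hcorner⟩
    · exact .inl h.symm
    · exact .inr (.inr (.inl h))
    · exact .inr (.inl h)
    · exact .inr (.inr (.inr ⟨c, hc.symm, hcorner.swap⟩))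
  rcases hr.uncross hs (h𝔓 _ hp.1) (h𝔓 _ hp.2.1) (h𝔓 _ hq.1).1 (h𝔓 _ hq.2.1).1 hord with
    h | h | ⟨c, hc, hcorner⟩
  · exact .inl h
  · exact .inr (.inl h)
  · exact .inr (.inr (.inr ⟨c, .inr hc, hcorner⟩))

theorem exists_nestedSet_effDistinguishes (h𝔓 : ∀ P ∈ 𝔓, ProfileIn 𝒱 P ∧ Robust 𝒱 P)
    (hdist : ∀ P ∈ 𝔓, ∀ Q ∈ 𝔓, P ≠ Q → Distinguishable 𝒱.toSepUniverse P Q) :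
    ∃ T : Set U, SepSystem 𝒱.toSepUniverse T ∧ NestedSet 𝒱.toSepUniverse T ∧
      (∀ s ∈ T, ∃ P ∈ 𝔓, ∃ Q ∈ 𝔓, EffDistinguishes 𝒱 s P Q) ∧
      ∀ P ∈ 𝔓, ∀ Q ∈ 𝔓, P ≠ Q → ∃ s ∈ T, EffDistinguishes 𝒱 s P Q := by
  obtain ⟨N, -, hNsub, hNmeets, hN⟩ :=
    (splinters_effDistinguishers h𝔓).exists_transversal 𝔓.offDiag.toFinite
      fun p hp => (hdist p.1 hp.1 p.2 hp.2.1 hp.2.2).exists_effDistinguishes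
  have heff : ∀ s ∈ N, ∃ P ∈ 𝔓, ∃ Q ∈ 𝔓, EffDistinguishes 𝒱 s P Q := fun s hs =>
    let ⟨p, hp, hsp⟩ := Set.mem_iUnion₂.1 (hNsub hs)
    ⟨p.1, hp.1, p.2, hp.2.1, hsp⟩
  refine ⟨{s | s ∈ N ∨ 𝒱.inv s ∈ N}, fun s hs => ?_, NestedSet.setOf_mem_or_inv_mem hN, ?_, ?_⟩
  · exact hs.symm.imp_right ((𝒱.inv_inv s).symm ▸ ·)
  · rintro s (hs | hs)
    · exact heff s hs
    · simpa only [effDistinguishes_inv] using heff _ hs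
  · intro P hP Q hQ hne
    obtain ⟨s, hsN, hs⟩ := hNmeets (P, Q) ⟨hP, hQ, hne⟩
    exact ⟨s, .inl hsN, hs⟩

lemma ord_le_of_maximal_of_nestedSet {T : Set U} (hTsep : SepSystem 𝒱.toSepUniverse T)
    (hTnested : NestedSet 𝒱.toSepUniverse T)
    (hTeff : ∀ s ∈ T, ∃ P ∈ 𝔓, ∃ Q ∈ 𝔓, EffDistinguishes 𝒱 s P Q)
    (hTdist : ∀ P ∈ 𝔓, ∀ Q ∈ 𝔓, P ≠ Q → ∃ s ∈ T, EffDistinguishes 𝒱 s P Q)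
    (h𝔓 : ∀ P ∈ 𝔓, ProfileIn 𝒱 P) (hP : P ∈ 𝔓) (hs : Maximal (· ∈ T ∩ P) s)
    (hs' : s' ∈ P) (hle : s ≤ s') : 𝒱.ord s ≤ 𝒱.ord s' := by
  by_contra! hlt
  obtain ⟨hsT, hsP⟩ := hs.prop
  obtain ⟨Q, hQ, R, hR, hsQR, hsQ, hsR⟩ :
      ∃ Q ∈ 𝔓, ∃ R ∈ 𝔓, EffDistinguishes 𝒱 s Q R ∧ s ∈ Q ∧ 𝒱.inv s ∈ R := by
    obtain ⟨Q, hQ, R, hR, hsQR⟩ := hTeff s hsT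
    rcases hsQR.1 with h | h
    · exact ⟨Q, hQ, R, hR, hsQR, h⟩
    · exact ⟨R, hR, Q, hQ, effDistinguishes_comm.1 hsQR, h.symm⟩
  have hs'Q : s' ∉ Q := hsQR.notMem_of_le_of_ord_lt (h𝔓 R hR) hsR hle hlt
  have hs'Q' : 𝒱.inv s' ∈ Q := ((h𝔓 Q hQ).mem_or_inv_mem hsQ hlt.le).resolve_left hs'Q
  obtain ⟨t, htT, htPQ, htP, htQ⟩ :
      ∃ t ∈ T, EffDistinguishes 𝒱 t P Q ∧ t ∈ P ∧ 𝒱.inv t ∈ Q := by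
    obtain ⟨t, htT, ht⟩ := hTdist P hP Q hQ fun h => hs'Q (h ▸ hs')
    rcases ht.1 with h | h
    · exact ⟨t, htT, ht, h⟩
    · exact ⟨𝒱.inv t, hTsep t htT, effDistinguishes_inv.2 ht, h.1, by rw [𝒱.inv_inv]; exact h.2⟩
  have hts : 𝒱.ord t < 𝒱.ord s := (htPQ.2 s' (.inl ⟨hs', hs'Q'⟩)).trans_lt hlt
  have hst : s ≤ t := hsQR.le_of_nested_of_ord_lt (h𝔓 P hP) (h𝔓 Q hQ) (h𝔓 R hR)
    hsP hsQ hsR htP htQ (hTnested t htT s hsT) hts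
  exact hts.ne (congrArg 𝒱.ord (hs.eq_of_le ⟨htT, htP⟩ hst)).symm

theorem tree_of_tangles_mixed_orders_general (𝒱 : SubmodUniverse U) (𝔓 : Set (Set U))
    (h𝔓 : ∀ P ∈ 𝔓, ProfileIn 𝒱 P ∧ Robust 𝒱 P)
    (hdist : ∀ P ∈ 𝔓, ∀ Q ∈ 𝔓, P ≠ Q → Distinguishable 𝒱.toSepUniverse P Q) :
    ∃ T : Set U, NestedSet 𝒱.toSepUniverse T ∧
      (∀ P ∈ 𝔓, ∀ Q ∈ 𝔓, P ≠ Q → ∃ s ∈ T, Distinguishes 𝒱.toSepUniverse s P Q) ∧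
      (∀ P ∈ 𝔓, ∀ s ∈ P, (s ∈ T ∨ 𝒱.inv s ∈ T) →
        (∀ t ∈ P, (t ∈ T ∨ 𝒱.inv t ∈ T) → s ≤ t → s = t) →
        ∀ s' ∈ P, s ≤ s' → 𝒱.ord s ≤ 𝒱.ord s') := by
  obtain ⟨T, hTsep, hTnested, hTeff, hTdist⟩ := exists_nestedSet_effDistinguishes h𝔓 hdist
  refine ⟨T, hTnested, fun P hP Q hQ hne => ?_, fun P hP s hsP hsT hmax s' hs' hle => ?_⟩
  · obtain ⟨s, hsT, hs⟩ := hTdist P hP Q hQ hne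
    exact ⟨s, hsT, hs.1⟩
  · have hsT' : s ∈ T := hsT.elim id fun h => 𝒱.inv_inv s ▸ hTsep _ h
    have hs : Maximal (· ∈ T ∩ P) s :=
      ⟨⟨hsT', hsP⟩, fun t ht hst => (hmax t ht.2 (.inl ht.1) hst).ge⟩
    exact ord_le_of_maximal_of_nestedSet hTsep hTnested hTeff hTdist (fun P hP => (h𝔓 P hP).1) hP
      hs hs' hle

end TreeOfTangles

/-- Tree-of-tangles theorem for different orders: for every
set `𝔓` of pairwise distinguishable strongly robust profiles in a submodular
distributive universe there is a nested set `T` such that (i) any two profiles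
in `𝔓` are distinguished by some separation in `T`, and (ii) for every `P ∈ 𝔓`,
every maximal element `s` of the set of orientations of members of `T` lying in
`P`, and every `s' ∈ P` with `s ≤ s'`, we have `|s| ≤ |s'|`. -/
theorem tree_of_tangles_mixed_orders {W : Type*} [DistribLattice W] [Fintype W]
    (𝒱 : SubmodUniverse W) (𝔓 : Set (Set W))
    (h𝔓 : ∀ P ∈ 𝔓, ProfileIn 𝒱 P ∧ StronglyRobust 𝒱 P)
    (hdist : ∀ P ∈ 𝔓, ∀ Q ∈ 𝔓, P ≠ Q → Distinguishable 𝒱.toSepUniverse P Q) :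
    ∃ T : Set W, NestedSet 𝒱.toSepUniverse T ∧
      (∀ P ∈ 𝔓, ∀ Q ∈ 𝔓, P ≠ Q → ∃ s ∈ T, Distinguishes 𝒱.toSepUniverse s P Q) ∧
      (∀ P ∈ 𝔓, ∀ s ∈ P, (s ∈ T ∨ 𝒱.inv s ∈ T) →
        (∀ t ∈ P, (t ∈ T ∨ 𝒱.inv t ∈ T) → s ≤ t → s = t) →
        ∀ s' ∈ P, s ≤ s' → 𝒱.ord s ≤ 𝒱.ord s') := by
  exact tree_of_tangles_mixed_orders_general 𝒱 𝔓
    (fun P hP => ⟨(h𝔓 P hP).1, (h𝔓 P hP).2.robust⟩) hdist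

end SepDemo
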